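/- Let d ≥ 1 be an integer. There exist constants C = C(d) > 0 and c = c(d) > 0 such that for every 1 ≤ p ≤ ∞, every j ∈ ℤ, every t > 0, and every f ∈ 𝒮(ℝ^d), the function u_j(x) := (2π)^{−d} ∫_{ℝ^d} e^{i x·ξ} e^{−t|ξ|} φ̂₀(2^{−j}ξ) F[f](ξ) dξ satisfies ‖u_j‖_{L^p(ℝ^d)} ≤ C e^{−c 2^j t} ‖Δ_j f‖_{L^p(ℝ^d)}. (This is the dissipative estimate for the Poisson semigroup e^{−t|∇|} on Littlewood–Paley blocks.) -/

import Mathlib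

/-!
The block `Δ_j f` has Fourier transform `φ̂₀(2^{-j}ξ) f̂(ξ)`, so `u_j` is obtained from `Δ_j f` by the
Fourier multiplier `e^{-t|ξ|}`. As `φ̂₀` lives on the annulus `1/2 ≤ |ξ| ≤ 2`, this multiplier may be
replaced by `N_s(2^{-j}ξ)` with `s = 2^j t`, where `N_s = χ e^{-s|ξ|}` and the smooth cut-off `χ` is `1`
on the annulus and supported in `|ξ| ≥ 1/4` (`exists_cutoff`). Hence `u_j` is the convolution of
`Δ_j f` with a kernel (`integral_multiplier_eq`), and Young's inequality
(`eLpNorm_integral_mul_translate_le`) reduces the claim to an `L¹` bound for that kernel. This bound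
does not see the dilation by `2^j` (`lintegral_FT_dilate`).

All derivatives of `N_s` are bounded by a constant times `s^n e^{-s/4} = O(e^{-s/8})`
(`exists_iteratedFDeriv_damped_bound`), so `N_s` is `O(e^{-s/8})` in every Schwartz seminorm, and the
continuity of the Fourier transform from the Schwartz space to `L¹` gives the kernel bound
(`exists_multiplier`). Therefore `c = 1/8` works.
-/

open MeasureTheory Filter Complex
open scoped ENNReal NNReal RealInnerProductSpace Topology

noncomputable section

abbrev Rd (d : ℕ) := EuclideanSpace ℝ (Fin d)

/-- Fourier transform with the paper's convention `F[f](ξ) = ∫ e^{-i x·ξ} f(x) dx`. -/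
def FT {d : ℕ} (f : Rd d → ℂ) (ξ : Rd d) : ℂ :=
  ∫ x : Rd d, Complex.exp (-Complex.I * (↑(⟪x, ξ⟫) : ℂ)) * f x

/-- A Littlewood–Paley family: a Schwartz function `φ₀` whose Fourier transform is
real, takes values in `[0,1]`, is supported in the annulus `1/2 ≤ |ξ| ≤ 2`, and whose
dyadic dilates sum to `1` away from the origin. -/
structure LPData (d : ℕ) where
  φ : SchwartzMap (Rd d) ℂ
  him : ∀ ξ : Rd d, (FT (⇑φ) ξ).im = 0
  h0 : ∀ ξ : Rd d, 0 ≤ (FT (⇑φ) ξ).re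
  h1 : ∀ ξ : Rd d, (FT (⇑φ) ξ).re ≤ 1
  hsupp : ∀ ξ : Rd d, FT (⇑φ) ξ ≠ 0 → (1/2 : ℝ) ≤ ‖ξ‖ ∧ ‖ξ‖ ≤ 2
  hsum : ∀ ξ : Rd d, ξ ≠ 0 → HasSum (fun j : ℤ => FT (⇑φ) ((2:ℝ) ^ (-j) • ξ)) 1

/-- Littlewood–Paley block `Δ_j f = φ_j * f`, where `φ_j(x) = 2^{dj} φ₀(2^j x)`. -/
def LP {d : ℕ} (P : LPData d) (j : ℤ) (f : Rd d → ℂ) (x : Rd d) : ℂ :=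
  ∫ y : Rd d, (((2:ℝ) ^ ((d : ℤ) * j) : ℝ) : ℂ) * P.φ ((2:ℝ) ^ j • y) * f (x - y)

/-- `ℓ^r(ℤ)`-norm of a family of extended nonnegative reals. -/
def ellNorm (r : ℝ≥0∞) (a : ℤ → ℝ≥0∞) : ℝ≥0∞ :=
  if r = ∞ then ⨆ j, a j else (∑' j, a j ^ r.toReal) ^ (1 / r.toReal)

/-- Homogeneous Besov norm `‖f‖_{Ḃ^s_{p,r}}`. -/
def besov {d : ℕ} (P : LPData d) (s : ℝ) (p r : ℝ≥0∞) (f : Rd d → ℂ) : ℝ≥0∞ :=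
  ellNorm r fun j => ENNReal.ofReal ((2:ℝ) ^ (s * (j:ℝ))) * eLpNorm (LP P j f) p volume

/-- Mixed norm `L^q_t(0,∞; L^p_x)`. -/
def LqLp {d : ℕ} (q p : ℝ≥0∞) (g : ℝ → Rd d → ℂ) : ℝ≥0∞ :=
  if q = ∞ then essSup (fun t => eLpNorm (g t) p volume) (volume.restrict (Set.Ioi (0:ℝ)))
  else (∫⁻ t in Set.Ioi (0:ℝ), (eLpNorm (g t) p volume) ^ q.toReal) ^ (1 / q.toReal)

/-- Chemin–Lerner norm `‖f‖_{L̃^q(Ḃ^s_{p,r})}` on `ℝ^d × (0,∞)`. -/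
def CL {d : ℕ} (P : LPData d) (s : ℝ) (q p r : ℝ≥0∞) (f : ℝ → Rd d → ℂ) : ℝ≥0∞ :=
  ellNorm r fun j => ENNReal.ofReal ((2:ℝ) ^ (s * (j:ℝ))) * LqLp q p fun t => LP P j (f t)

/-- `f : ℝ^d × (0,∞) → ℂ` (curried as `f t x`) is slice-Schwartz: continuous on
`ℝ^d × (0,∞)` and Schwartz in `x` for each fixed `t > 0`. -/
def SliceSchwartz {d : ℕ} (f : ℝ → Rd d → ℂ) : Prop :=
  ContinuousOn (fun z : Rd d × ℝ => f z.2 z.1) (Set.univ ×ˢ Set.Ioi 0) ∧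
  ∀ t : ℝ, 0 < t → ∃ g : SchwartzMap (Rd d) ℂ, f t = ⇑g

/-! ### Symbols with exponentially small Schwartz seminorms -/

lemma natCast_le_coe_top (m : ℕ) : (m : WithTop ℕ∞) ≤ ((⊤ : ℕ∞) : WithTop ℕ∞) := by
  exact_mod_cast le_top

lemma exists_iteratedFDeriv_bound_on_compact {E : Type*} [NormedAddCommGroup E]
    [NormedSpace ℝ E] {h : E → ℝ} (hh : ContDiff ℝ (⊤ : ℕ∞) h) {K : Set E} (hK : IsCompact K)
    (n : ℕ) :
    ∃ D : ℝ, 1 ≤ D ∧ ∀ i ≤ n, ∀ x ∈ K, ‖iteratedFDeriv ℝ i h x‖ ≤ D := by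
  have hc : ∀ i : ℕ, ∃ D : ℝ, ∀ x ∈ K, ‖iteratedFDeriv ℝ i h x‖ ≤ D := fun i =>
    hK.exists_bound_of_continuousOn
      ((hh.continuous_iteratedFDeriv (m := i) (by exact_mod_cast le_top)).continuousOn)
  choose D hD using hc
  refine ⟨1 + ∑ i ∈ Finset.range (n + 1), |D i|, ?_, fun i hi x hx => ?_⟩
  · have : 0 ≤ ∑ i ∈ Finset.range (n + 1), |D i| := Finset.sum_nonneg fun _ _ => abs_nonneg _
    linarith
  · have h1 : |D i| ≤ ∑ i ∈ Finset.range (n + 1), |D i| :=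
      Finset.single_le_sum (f := fun i => |D i|) (fun _ _ => abs_nonneg _)
        (Finset.mem_range.2 (by omega))
    have h2 := hD i x hx
    have h3 := le_abs_self (D i)
    linarith

/-- The powers of `s` produced by differentiation are absorbed by half of the exponential decay:
`sⁱ e^{-s/4} ≤ i! 8ⁱ e^{-s/8}`. -/
lemma norm_iteratedFDeriv_exp_le {s y : ℝ} (hs : 0 ≤ s) (hy : 1 / 4 ≤ y) {i n : ℕ} (hi : i ≤ n) :
    ‖iteratedFDeriv ℝ i (fun y : ℝ => Real.exp (-s * y)) y‖
      ≤ (n.factorial * 8 ^ n) * Real.exp (-s / 8) := by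
  rw [norm_iteratedFDeriv_eq_norm_iteratedDeriv, iteratedDeriv_exp_const_mul]
  have h1 : s ^ i ≤ (i.factorial * 8 ^ i) * Real.exp (s / 8) := by
    have h := Real.pow_div_factorial_le_exp (s / 8) (by positivity) i
    rw [div_le_iff₀ (by positivity), div_pow, div_le_iff₀ (by positivity)] at h
    linarith
  have h2 : ((i.factorial : ℝ) * 8 ^ i) ≤ n.factorial * 8 ^ n := by
    gcongr
    norm_num
  calc ‖(-s) ^ i * Real.exp (-s * y)‖ = s ^ i * Real.exp (-s * y) := by
        simp [abs_of_nonneg hs]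
    _ ≤ ((n.factorial * 8 ^ n) * Real.exp (s / 8)) * Real.exp (-s / 4) := by
        gcongr
        · exact h1.trans (by gcongr)
        · nlinarith
    _ = (n.factorial * 8 ^ n) * Real.exp (-s / 8) := by
        rw [mul_assoc, ← Real.exp_add]
        congr 2
        ring

/-- Every Schwartz seminorm of `χ e^{-s h}` is `O(e^{-s/8})` uniformly in `s ≥ 0`, by the Leibniz and
Faà di Bruno bounds on the compact support of `χ`. -/
lemma exists_iteratedFDeriv_damped_bound {E : Type*} [NormedAddCommGroup E] [NormedSpace ℝ E]
    {χ h : E → ℝ} (hχ : ContDiff ℝ (⊤ : ℕ∞) χ) (hh : ContDiff ℝ (⊤ : ℕ∞) h)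
    (hcs : HasCompactSupport χ) (hlow : ∀ x ∈ tsupport χ, 1 / 4 ≤ h x) (k n : ℕ) :
    ∃ C : ℝ, 0 ≤ C ∧ ∀ s : ℝ, 0 ≤ s → ∀ x : E,
      ‖x‖ ^ k * ‖iteratedFDeriv ℝ n (fun x => ((χ x * Real.exp (-s * h x) : ℝ) : ℂ)) x‖
        ≤ C * Real.exp (-s / 8) := by
  obtain ⟨D, hD1, hD⟩ := exists_iteratedFDeriv_bound_on_compact hh hcs n
  obtain ⟨B, hB1, hB⟩ := exists_iteratedFDeriv_bound_on_compact hχ hcs n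
  obtain ⟨R, hR⟩ := (IsCompact.isBounded hcs).exists_norm_le
  have hD0 : 0 ≤ D := by linarith
  have hB0 : 0 ≤ B := by linarith
  set A : ℝ := ∑ i ∈ Finset.range (n + 1),
    (n.choose i : ℝ) * B * ((n - i).factorial *
      ((n - i).factorial * 8 ^ (n - i)) * D ^ (n - i)) with hA
  have hA0 : 0 ≤ A := Finset.sum_nonneg fun _ _ => by positivity
  refine ⟨|R| ^ k * A, by positivity, fun s hs x => ?_⟩
  have hexp : ContDiff ℝ (⊤ : ℕ∞) (fun y : ℝ => Real.exp (-s * y)) := by fun_prop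
  have hcomp : ContDiff ℝ (⊤ : ℕ∞) ((fun y : ℝ => Real.exp (-s * y)) ∘ h) := hexp.comp hh
  have hprod : ContDiff ℝ (⊤ : ℕ∞) (fun x => χ x * Real.exp (-s * h x)) := hχ.mul hcomp
  have hnorm : ‖iteratedFDeriv ℝ n (fun x => ((χ x * Real.exp (-s * h x) : ℝ) : ℂ)) x‖
      = ‖iteratedFDeriv ℝ n (fun x => χ x * Real.exp (-s * h x)) x‖ :=
    Complex.ofRealLI.norm_iteratedFDeriv_comp_left (hprod.contDiffAt)
      (i := n) (by exact_mod_cast le_top)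
  rw [hnorm]
  by_cases hx : x ∈ tsupport χ
  · have h1 : ‖x‖ ^ k ≤ |R| ^ k := by
      gcongr
      exact (hR x hx).trans (le_abs_self _)
    have h2 : ‖iteratedFDeriv ℝ n (fun x => χ x * Real.exp (-s * h x)) x‖
        ≤ A * Real.exp (-s / 8) := by
      refine (norm_iteratedFDeriv_mul_le hχ hcomp x (n := n)
        (by exact_mod_cast le_top)).trans ?_
      rw [hA, Finset.sum_mul]
      refine Finset.sum_le_sum fun i hi => ?_
      have hi' : i ≤ n := by have := Finset.mem_range.1 hi; omega
      have h3 : ‖iteratedFDeriv ℝ (n - i) ((fun y : ℝ => Real.exp (-s * y)) ∘ h) x‖ ≤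
          (n - i).factorial * (((n - i).factorial * 8 ^ (n - i)) * Real.exp (-s / 8))
            * D ^ (n - i) := by
        refine norm_iteratedFDeriv_comp_le (N := ((⊤ : ℕ∞) : WithTop ℕ∞)) hexp hh
          (natCast_le_coe_top _) x
          (fun m hm => norm_iteratedFDeriv_exp_le hs (hlow x hx) hm) (fun m hm1 hm => ?_)
        exact (hD m (by omega) x hx).trans (le_self_pow₀ hD1 (by omega))
      calc _ ≤ (n.choose i : ℝ) * B * ((n - i).factorial *
            (((n - i).factorial * 8 ^ (n - i)) * Real.exp (-s / 8)) * D ^ (n - i)) := by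
            gcongr
            exact hB i hi' x hx
        _ = _ := by ring
    calc _ ≤ |R| ^ k * (A * Real.exp (-s / 8)) := by gcongr
      _ = _ := by ring
  · have hx' : x ∉ tsupport (fun x => χ x * Real.exp (-s * h x)) := fun hmem =>
      hx (tsupport_mul_subset_left hmem)
    have h0 : iteratedFDeriv ℝ n (fun x => χ x * Real.exp (-s * h x)) x = 0 := by
      by_contra hne
      exact hx' (support_iteratedFDeriv_subset (𝕜 := ℝ) n hne)
    rw [h0]
    simp only [norm_zero, mul_zero]
    positivity

/-- A cut-off `χ` equal to `1` on the annulus `1/2 ≤ |x| ≤ 2`, and a globally smooth `h` that agrees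
with `|x|` on `|x| ≥ 1/4`, hence on the support of `χ`. -/
lemma exists_cutoff (E : Type*) [NormedAddCommGroup E] [InnerProductSpace ℝ E]
    [FiniteDimensional ℝ E] :
    ∃ χ h : E → ℝ, ContDiff ℝ (⊤ : ℕ∞) χ ∧ ContDiff ℝ (⊤ : ℕ∞) h ∧ HasCompactSupport χ ∧
      (∀ x ∈ tsupport χ, 1 / 4 ≤ h x) ∧
      ∀ x : E, 1 / 2 ≤ ‖x‖ → ‖x‖ ≤ 2 → χ x = 1 ∧ h x = ‖x‖ := by
  let b₁ : ContDiffBump (0 : E) := ⟨2, 3, by norm_num, by norm_num⟩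
  let b₂ : ContDiffBump (0 : E) := ⟨1 / 4, 1 / 2, by norm_num, by norm_num⟩
  let b₃ : ContDiffBump (0 : E) := ⟨1 / 8, 1 / 4, by norm_num, by norm_num⟩
  have hh : ∀ x : E, 1 / 4 ≤ ‖x‖ → (1 - b₃ x) * ‖x‖ = ‖x‖ := fun x hx => by
    rw [b₃.zero_of_le_dist (by simpa [b₃] using hx)]
    ring
  refine ⟨fun x => b₁ x - b₂ x, fun x => (1 - b₃ x) * ‖x‖, b₁.contDiff.sub b₂.contDiff,
    ?_, b₁.hasCompactSupport.sub b₂.hasCompactSupport, ?_, ?_⟩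
  · rw [contDiff_iff_contDiffAt]
    intro x
    by_cases hx : x = 0
    · subst hx
      refine (contDiffAt_const (c := (0 : ℝ))).congr_of_eventuallyEq ?_
      filter_upwards [b₃.eventuallyEq_one] with y hy
      simp [hy]
    · exact (contDiffAt_const.sub b₃.contDiffAt).mul (contDiffAt_norm ℝ hx)
  · intro x hx
    have hcl : IsClosed {x : E | 1 / 4 ≤ ‖x‖} := isClosed_le continuous_const continuous_norm
    have hsub : tsupport (fun x => b₁ x - b₂ x) ⊆ {x : E | 1 / 4 ≤ ‖x‖} := by
      refine closure_minimal (fun y hy => ?_) hcl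
      by_contra hlt
      simp only [Set.mem_ofPred_eq, not_le] at hlt
      refine hy ?_
      have e₁ : b₁ y = 1 := b₁.one_of_mem_closedBall
        (by simp only [b₁, Metric.mem_closedBall, dist_zero_right]; linarith)
      have e₂ : b₂ y = 1 := b₂.one_of_mem_closedBall
        (by simp only [b₂, Metric.mem_closedBall, dist_zero_right]; linarith)
      simp [e₁, e₂]
    have := hsub hx
    simp only [Set.mem_ofPred_eq] at this
    exact this.trans_eq (hh x this).symm
  · intro x h1 h2
    refine ⟨?_, hh x (by linarith)⟩
    have e₁ : b₁ x = 1 := b₁.one_of_mem_closedBall (by simpa [b₁] using h2)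
    have e₂ : b₂ x = 0 := b₂.zero_of_le_dist (by simpa [b₂] using h1)
    simp [e₁, e₂]

open scoped FourierTransform SchwartzMap in
/-- Schwartz symbols that agree with `e^{-s|ξ|}` on the annulus `1/2 ≤ |ξ| ≤ 2` and whose Fourier
transforms have `L¹` norm `O(e^{-s/8})`. The map `f ↦ ‖𝓕 f‖_{L¹}` is a continuous seminorm on the
Schwartz space, hence is dominated by finitely many of the defining seminorms. -/
lemma exists_multiplier (d : ℕ) :
    ∃ C > (0 : ℝ), ∃ N : ℝ → 𝓢(Rd d, ℂ), ∀ s : ℝ, 0 ≤ s →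
      (∀ ξ : Rd d, 1 / 2 ≤ ‖ξ‖ → ‖ξ‖ ≤ 2 → N s ξ = Complex.exp (-(↑(s * ‖ξ‖) : ℂ))) ∧
      ∫⁻ x, ‖𝓕 (⇑(N s)) x‖ₑ ≤ ENNReal.ofReal (C * Real.exp (-s / 8)) := by
  obtain ⟨χ, h, hχ, hh, hcs, hlow, hone⟩ := exists_cutoff (Rd d)
  have hsm : ∀ s : ℝ, ContDiff ℝ (⊤ : ℕ∞)
      (fun x : Rd d => ((χ x * Real.exp (-s * h x) : ℝ) : ℂ)) := fun s =>
    Complex.ofRealCLM.contDiff.comp (hχ.mul (Real.contDiff_exp.comp (contDiff_const.mul hh)))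
  have hsupp : ∀ s : ℝ, HasCompactSupport
      (fun x : Rd d => ((χ x * Real.exp (-s * h x) : ℝ) : ℂ)) := fun s =>
    (hcs.mul_right (f' := fun x => Real.exp (-s * h x))).comp_left (g := fun r : ℝ => (r : ℂ))
      Complex.ofReal_zero
  let T : 𝓢(Rd d, ℂ) →L[ℝ] Lp ℂ 1 (volume : Measure (Rd d)) :=
    (SchwartzMap.toLpCLM ℝ ℂ 1 volume) ∘L (SchwartzMap.fourierTransformCLM ℝ)
  let q : Seminorm ℝ 𝓢(Rd d, ℂ) := (normSeminorm ℝ (Lp ℂ 1 (volume : Measure (Rd d)))).comp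
    T.toLinearMap
  have hq : Continuous q := continuous_norm.comp T.continuous
  obtain ⟨S, B, hB, hle⟩ := Seminorm.bound_of_continuous (schwartz_withSeminorms ℝ (Rd d) ℂ) q hq
  choose A hA0 hA using fun i : ℕ × ℕ =>
    exists_iteratedFDeriv_damped_bound hχ hh hcs hlow i.1 i.2
  have hsum : 0 ≤ ∑ i ∈ S, A i := Finset.sum_nonneg fun i _ => hA0 i
  refine ⟨B * (∑ i ∈ S, A i) + 1, by positivity, fun s => (hsupp s).toSchwartzMap (hsm s),
    fun s hs => ⟨fun ξ h1 h2 => ?_, ?_⟩⟩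
  · obtain ⟨e1, e2⟩ := hone ξ h1 h2
    rw [HasCompactSupport.toSchwartzMap_toFun, e1, e2]
    push_cast
    rw [one_mul, neg_mul]
  · set Ns := (hsupp s).toSchwartzMap (hsm s) with hNs
    have hsem : S.sup (schwartzSeminormFamily ℝ (Rd d) ℂ) Ns
        ≤ (∑ i ∈ S, A i) * Real.exp (-s / 8) := by
      refine Seminorm.finset_sup_apply_le (by positivity) fun i hi => ?_
      refine (SchwartzMap.seminorm_le_bound ℝ i.1 i.2 Ns
        (mul_nonneg (hA0 i) (Real.exp_pos _).le) (hA i s hs)).trans ?_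
      gcongr
      exact Finset.single_le_sum (f := A) (fun i _ => hA0 i) hi
    have hqN : q Ns = ∫ x, ‖𝓕 (⇑Ns) x‖ := SchwartzMap.norm_toLp_one
    have hint : Integrable (𝓕 (⇑Ns)) := (𝓕 Ns).integrable
    rw [← ofReal_integral_norm_eq_lintegral_enorm hint, ← hqN]
    refine ENNReal.ofReal_le_ofReal ?_
    have h1 : q Ns ≤ B * S.sup (schwartzSeminormFamily ℝ (Rd d) ℂ) Ns := hle Ns
    have h2 := Real.exp_pos (-s / 8)
    calc q Ns ≤ B * ((∑ i ∈ S, A i) * Real.exp (-s / 8)) := h1.trans (by gcongr)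
      _ ≤ _ := by nlinarith

/-! ### Young's inequality -/

/-- Young's inequality `L¹ * Lᵖ → Lᵖ`. With the finite measure `κ = |k| dz`, the integral is bounded
by `∫ |g(x + z)| dκ(z)`; for `p < ∞` Jensen's inequality for `κ` and Tonelli's theorem conclude. -/
lemma eLpNorm_integral_mul_translate_le {d : ℕ} {k g : Rd d → ℂ} (hk : Continuous k)
    (hg : Continuous g) (hki : ∫⁻ z, ‖k z‖ₑ ≠ ∞) {p : ℝ≥0∞} (hp : 1 ≤ p) :
    eLpNorm (fun x => ∫ z, k z * g (x + z)) p volume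
      ≤ (∫⁻ z, ‖k z‖ₑ) * eLpNorm g p volume := by
  set κ : Measure (Rd d) := volume.withDensity fun z => ‖k z‖ₑ with hκ
  have hkm : Measurable fun z => ‖k z‖ₑ := hk.enorm.measurable
  have hgm : Measurable g := hg.measurable
  have huniv : κ Set.univ = ∫⁻ z, ‖k z‖ₑ := by simp [hκ]
  have hfin : IsFiniteMeasure κ := ⟨by rw [huniv]; exact hki.lt_top⟩
  have hpt : ∀ x, ‖∫ z, k z * g (x + z)‖ₑ ≤ ∫⁻ z, ‖g (x + z)‖ₑ ∂κ := fun x => by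
    refine (enorm_integral_le_lintegral_enorm _).trans_eq ?_
    rw [hκ, lintegral_withDensity_eq_lintegral_mul _ hkm (by fun_prop)]
    simp [enorm_mul]
  rw [← huniv]
  by_cases htop : p = ∞
  · subst htop
    simp only [eLpNorm_exponent_top]
    refine essSup_le_of_ae_le _ (Eventually.of_forall fun x => (hpt x).trans ?_)
    calc ∫⁻ z, ‖g (x + z)‖ₑ ∂κ ≤ ∫⁻ _, eLpNormEssSup g volume ∂κ := by
          refine lintegral_mono_ae ?_
          refine (withDensity_absolutelyContinuous _ _).ae_le ?_
          exact (measurePreserving_add_left volume x).quasiMeasurePreserving.ae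
            (enorm_ae_le_eLpNormEssSup g volume)
      _ = _ := by rw [lintegral_const, mul_comm]
  · have hp0 : p ≠ 0 := (zero_lt_one.trans_le hp).ne'
    have hr : 1 ≤ p.toReal := by
      simpa using (ENNReal.toReal_le_toReal ENNReal.one_ne_top htop).2 hp
    have hr0 : 0 < p.toReal := by linarith
    set r := p.toReal with hrdef
    have hJ : ∀ x, (∫⁻ z, ‖g (x + z)‖ₑ ∂κ) ^ r
        ≤ κ Set.univ ^ (r - 1) * ∫⁻ z, ‖g (x + z)‖ₑ ^ r ∂κ := fun x => by
      have h := eLpNorm_le_eLpNorm_mul_rpow_measure_univ (μ := κ) (f := fun z => g (x + z)) hp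
        (Continuous.aestronglyMeasurable (by fun_prop))
      rw [eLpNorm_one_eq_lintegral_enorm, eLpNorm_eq_lintegral_rpow_enorm_toReal hp0 htop] at h
      refine (ENNReal.rpow_le_rpow h hr0.le).trans_eq ?_
      rw [ENNReal.mul_rpow_of_nonneg _ _ hr0.le, ← ENNReal.rpow_mul, ← ENNReal.rpow_mul,
        ← hrdef, mul_comm]
      congr 2
      · simp only [ENNReal.toReal_one]; field_simp
      · rw [one_div_mul_cancel hr0.ne', ENNReal.rpow_one]
    have hT : ∫⁻ x, ∫⁻ z, ‖g (x + z)‖ₑ ^ r ∂κ = κ Set.univ * ∫⁻ x, ‖g x‖ₑ ^ r := by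
      rw [lintegral_lintegral_swap (Measurable.aemeasurable (by fun_prop))]
      have : ∀ z, ∫⁻ x, ‖g (x + z)‖ₑ ^ r = ∫⁻ x, ‖g x‖ₑ ^ r := fun z =>
        lintegral_add_right_eq_self (fun x => ‖g x‖ₑ ^ r) z
      simp_rw [this]
      rw [lintegral_const, mul_comm]
    rw [eLpNorm_eq_lintegral_rpow_enorm_toReal hp0 htop,
      eLpNorm_eq_lintegral_rpow_enorm_toReal hp0 htop, ← hrdef]
    have key : ∫⁻ x, ‖∫ z, k z * g (x + z)‖ₑ ^ r ≤ κ Set.univ ^ r * ∫⁻ x, ‖g x‖ₑ ^ r := by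
      calc _ ≤ ∫⁻ x, κ Set.univ ^ (r - 1) * ∫⁻ z, ‖g (x + z)‖ₑ ^ r ∂κ :=
            lintegral_mono fun x => (ENNReal.rpow_le_rpow (hpt x) hr0.le).trans (hJ x)
        _ = κ Set.univ ^ (r - 1) * (κ Set.univ * ∫⁻ x, ‖g x‖ₑ ^ r) := by
            rw [lintegral_const_mul' _ _
              (ENNReal.rpow_ne_top_of_nonneg (by linarith) (measure_ne_top κ _)), hT]
        _ = _ := by
            rw [← mul_assoc]
            congr 1
            nth_rewrite 2 [← ENNReal.rpow_one (κ Set.univ)]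
            rw [← ENNReal.rpow_add_of_nonneg _ _ (by linarith) zero_le_one]
            congr 1
            ring
    refine (ENNReal.rpow_le_rpow key (by positivity)).trans_eq ?_
    rw [ENNReal.mul_rpow_of_nonneg _ _ (by positivity), ← ENNReal.rpow_mul,
      mul_one_div_cancel hr0.ne', ENNReal.rpow_one]

/-! ### The transform `FT`: dilations, multipliers and Littlewood–Paley blocks -/

open scoped FourierTransform in
lemma FT_eq_fourier {d : ℕ} (f : Rd d → ℂ) (ξ : Rd d) :
    FT f ξ = 𝓕 f ((2 * Real.pi)⁻¹ • ξ) := by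
  rw [FT, Real.fourier_eq']
  refine integral_congr_ae (Eventually.of_forall fun x => ?_)
  have hpi : (Real.pi : ℂ) ≠ 0 := by exact_mod_cast Real.pi_ne_zero
  simp only [inner_smul_right, smul_eq_mul]
  congr 2
  push_cast
  field_simp

lemma FT_dilate {d : ℕ} (f : Rd d → ℂ) {a : ℝ} (ha : 0 < a) (ξ : Rd d) :
    FT (fun x => f (a • x)) ξ = ((a ^ d : ℝ) : ℂ)⁻¹ * FT f (a⁻¹ • ξ) := by
  have h := Measure.integral_comp_smul (volume : Measure (Rd d))
    (fun x => Complex.exp (-Complex.I * (↑(⟪x, a⁻¹ • ξ⟫) : ℂ)) * f x) a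
  rw [finrank_euclideanSpace_fin, abs_of_pos (by positivity)] at h
  simp only [inner_smul_left, inner_smul_right] at h
  simp only [FT, inner_smul_right]
  rw [← Complex.ofReal_inv, ← Complex.real_smul, ← h]
  refine integral_congr_ae (Eventually.of_forall fun x => ?_)
  have hcancel : a⁻¹ * (a * ⟪x, ξ⟫) = ⟪x, ξ⟫ := by field_simp
  simp [hcancel]

lemma lintegral_comp_smul_Rd {d : ℕ} (F : Rd d → ℝ≥0∞) {a : ℝ} (ha : 0 < a) :
    ∫⁻ x, F (a • x) = ENNReal.ofReal ((a ^ d)⁻¹) * ∫⁻ x, F x := by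
  have h := Measure.map_addHaar_smul (volume : Measure (Rd d)) ha.ne'
  rw [finrank_euclideanSpace_fin, abs_of_pos (by positivity)] at h
  rw [← smul_eq_mul, ← lintegral_smul_measure, ← h]
  exact (lintegral_map_equiv F (Homeomorph.smulOfNeZero a ha.ne').toMeasurableEquiv).symm

open scoped FourierTransform in
/-- The `L¹` norm of the Fourier transform is invariant under dilation of the function; the factor
`(2π)^d` comes from the normalisation of `FT` against `𝓕`. -/
lemma lintegral_FT_dilate {d : ℕ} (f : Rd d → ℂ) {a : ℝ} (ha : 0 < a) :
    ∫⁻ z, ‖FT (fun x => f (a • x)) z‖ₑ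
      = ENNReal.ofReal ((2 * Real.pi) ^ d) * ∫⁻ z, ‖𝓕 f z‖ₑ := by
  have hpi := Real.pi_pos
  simp_rw [FT_dilate f ha, FT_eq_fourier, enorm_mul, smul_smul]
  rw [lintegral_const_mul' _ _ enorm_ne_top,
    lintegral_comp_smul_Rd (fun z => ‖𝓕 f z‖ₑ) (by positivity), ← mul_assoc]
  congr 1
  rw [← Complex.ofReal_inv, ← ofReal_norm, Complex.norm_real, Real.norm_eq_abs,
    abs_of_pos (by positivity), ← ENNReal.ofReal_mul (by positivity)]
  congr 1
  rw [← inv_pow, ← inv_pow, ← mul_pow]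
  congr 1
  field_simp

/-- A Fourier multiplier with integrable symbol `m` acts as integration against the kernel
`FT m`: insert the integral defining `FT g` and exchange the order of integration. -/
lemma integral_multiplier_eq {d : ℕ} {m g : Rd d → ℂ} (hm : Integrable m) (hg : Integrable g)
    (x : Rd d) :
    ∫ ξ, Complex.exp (Complex.I * (↑(⟪x, ξ⟫) : ℂ)) * m ξ * FT g ξ
      = ∫ z, FT m z * g (x + z) := by
  have hint : Integrable (Function.uncurry fun ξ y : Rd d =>
      Complex.exp (-Complex.I * (↑(⟪ξ, y - x⟫) : ℂ)) * (m ξ * g y)) (volume.prod volume) := by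
    refine (hm.mul_prod hg).bdd_mul (c := 1) (Continuous.aestronglyMeasurable (by fun_prop)) ?_
    refine Eventually.of_forall fun z => ?_
    rw [Complex.norm_exp]
    simp
  calc _ = ∫ ξ, ∫ y, Complex.exp (-Complex.I * (↑(⟪ξ, y - x⟫) : ℂ)) * (m ξ * g y) := by
        refine integral_congr_ae (Eventually.of_forall fun ξ => ?_)
        simp only [FT]
        rw [← integral_const_mul]
        refine integral_congr_ae (Eventually.of_forall fun y => ?_)
        simp only
        have : Complex.exp (-Complex.I * (↑(⟪ξ, y - x⟫) : ℂ))
            = Complex.exp (Complex.I * (↑(⟪x, ξ⟫) : ℂ))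
              * Complex.exp (-Complex.I * (↑(⟪y, ξ⟫) : ℂ)) := by
          rw [← Complex.exp_add, inner_sub_right, real_inner_comm ξ x, real_inner_comm ξ y]
          congr 1
          push_cast
          ring
        rw [this]
        ring
    _ = ∫ y, ∫ ξ, Complex.exp (-Complex.I * (↑(⟪ξ, y - x⟫) : ℂ)) * (m ξ * g y) :=
        integral_integral_swap hint
    _ = ∫ y, FT m (y - x) * g y := by
        refine integral_congr_ae (Eventually.of_forall fun y => ?_)
        simp only [FT]
        rw [← integral_mul_const]
        refine integral_congr_ae (Eventually.of_forall fun ξ => ?_)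
        simp only
        ring
    _ = ∫ z, FT m z * g (x + z) := by
        rw [← integral_add_left_eq_self (fun y => FT m (y - x) * g y) x]
        simp

/-- The Schwartz function `x ↦ f (a • x)`. -/
def dilateSchwartz {d : ℕ} (f : SchwartzMap (Rd d) ℂ) {a : ℝ} (ha : a ≠ 0) :
    SchwartzMap (Rd d) ℂ :=
  SchwartzMap.compCLMOfContinuousLinearEquiv ℂ
    (LinearEquiv.smulOfNeZero ℝ (Rd d) a ha).toContinuousLinearEquiv f

lemma dilateSchwartz_coe {d : ℕ} (f : SchwartzMap (Rd d) ℂ) {a : ℝ} (ha : a ≠ 0) :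
    ⇑(dilateSchwartz f ha) = fun x => f (a • x) := rfl

open scoped FourierTransform in
lemma FT_continuous {d : ℕ} (f : SchwartzMap (Rd d) ℂ) : Continuous (FT (⇑f)) := by
  have : FT (⇑f) = fun ξ => (𝓕 f) ((2 * Real.pi)⁻¹ • ξ) := funext fun ξ => FT_eq_fourier _ _
  rw [this]
  exact (𝓕 f).continuous.comp (continuous_const_smul _)

open scoped FourierTransform in
/-- The block `Δ_j f` of a Schwartz function is again Schwartz, and its Fourier transform is
`φ̂₀(2^{-j}ξ) f̂(ξ)`. -/
lemma exists_LP_schwartz {d : ℕ} (P : LPData d) (j : ℤ) (f : SchwartzMap (Rd d) ℂ) :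
    ∃ g : SchwartzMap (Rd d) ℂ, LP P j (⇑f) = ⇑g ∧
      ∀ ξ, FT (⇑g) ξ = FT (⇑P.φ) ((2 : ℝ) ^ (-j) • ξ) * FT (⇑f) ξ := by
  have ha : (0 : ℝ) < 2 ^ j := by positivity
  let ψ : SchwartzMap (Rd d) ℂ :=
    (((2 : ℝ) ^ ((d : ℤ) * j) : ℝ) : ℂ) • dilateSchwartz P.φ ha.ne'
  have hψ : ∀ y, ψ y = (((2 : ℝ) ^ ((d : ℤ) * j) : ℝ) : ℂ) * P.φ ((2 : ℝ) ^ j • y) := fun y => rfl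
  let g := SchwartzMap.convolution (ContinuousLinearMap.mul ℂ ℂ) ψ f
  have hg : ⇑g = MeasureTheory.convolution (⇑ψ) (⇑f) (ContinuousLinearMap.mul ℂ ℂ) volume :=
    funext fun x => SchwartzMap.convolution_apply _ _ _ x
  refine ⟨g, ?_, fun ξ => ?_⟩
  · rw [hg]
    rfl
  · have h1 : FT (⇑ψ) ξ = FT (⇑P.φ) ((2 : ℝ) ^ (-j) • ξ) := by
      have h2 : FT (⇑ψ) ξ = (((2 : ℝ) ^ ((d : ℤ) * j) : ℝ) : ℂ)
          * FT (fun y => P.φ ((2 : ℝ) ^ j • y)) ξ := by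
        simp only [FT, hψ]
        rw [← integral_const_mul]
        refine integral_congr_ae (Eventually.of_forall fun y => ?_)
        simp only
        ring
      rw [h2, FT_dilate _ ha, ← mul_assoc, zpow_neg, ← zpow_natCast, ← zpow_mul, mul_comm j,
        mul_inv_cancel₀ (by exact_mod_cast (by positivity : (2 : ℝ) ^ ((d : ℤ) * j) ≠ 0)), one_mul]
    rw [← h1, hg, FT_eq_fourier, FT_eq_fourier, FT_eq_fourier]
    exact Real.fourier_mul_convolution_eq ψ.integrable f.integrable _

/-- Dissipative estimate for the Poisson semigroup `e^{-t|∇|}`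
on Littlewood–Paley blocks: `‖e^{-t|∇|} Δ_j f‖_{L^p} ≤ C e^{-c 2^j t} ‖Δ_j f‖_{L^p}`. -/
theorem poisson_semigroup_dissipative_estimate (d : ℕ) (hd : 1 ≤ d) (P : LPData d) :
    ∃ C > (0:ℝ), ∃ c > (0:ℝ), ∀ p : ℝ≥0∞, 1 ≤ p → ∀ j : ℤ, ∀ t : ℝ, 0 < t →
      ∀ f : SchwartzMap (Rd d) ℂ,
      eLpNorm (fun x : Rd d =>
          (((2 * Real.pi) ^ d : ℝ) : ℂ)⁻¹ *
            ∫ ξ : Rd d, Complex.exp (Complex.I * (↑(⟪x, ξ⟫) : ℂ)) *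
              Complex.exp (-(↑(t * ‖ξ‖) : ℂ)) *
              FT (⇑P.φ) ((2:ℝ) ^ (-j) • ξ) * FT (⇑f) ξ) p volume
        ≤ ENNReal.ofReal (C * Real.exp (-c * (2:ℝ) ^ j * t)) *
            eLpNorm (LP P j (⇑f)) p volume := by
  obtain ⟨C, hC, N, hN⟩ := exists_multiplier d
  refine ⟨C, hC, 1 / 8, by norm_num, fun p hp j t ht f => ?_⟩
  obtain ⟨g, hgLP, hgFT⟩ := exists_LP_schwartz P j f
  have ha : (0 : ℝ) < 2 ^ (-j) := by positivity
  have haj : (0 : ℝ) < 2 ^ j := by positivity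
  have hpi := Real.pi_pos
  set s : ℝ := 2 ^ j * t with hs
  obtain ⟨hNval, hNint⟩ := hN s (by positivity)
  set m := dilateSchwartz (N s) ha.ne' with hm
  set k : Rd d → ℂ := fun z => (((2 * Real.pi) ^ d : ℝ) : ℂ)⁻¹ * FT (⇑m) z with hk
  -- Where `φ̂₀(2^{-j}ξ) ≠ 0`, the point `2^{-j}ξ` lies in the annulus on which the symbol is exact.
  have hmult : ∀ ξ : Rd d, Complex.exp (-(↑(t * ‖ξ‖) : ℂ)) * FT (⇑P.φ) ((2 : ℝ) ^ (-j) • ξ)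
      = m ξ * FT (⇑P.φ) ((2 : ℝ) ^ (-j) • ξ) := fun ξ => by
    by_cases h0 : FT (⇑P.φ) ((2 : ℝ) ^ (-j) • ξ) = 0
    · rw [h0, mul_zero, mul_zero]
    · obtain ⟨h1, h2⟩ := P.hsupp _ h0
      have h3 : s * ‖(2 : ℝ) ^ (-j) • ξ‖ = t * ‖ξ‖ := by
        rw [norm_smul, Real.norm_of_nonneg ha.le, hs, zpow_neg]
        field_simp
      have h4 : m ξ = N s ((2 : ℝ) ^ (-j) • ξ) := rfl
      rw [h4, hNval _ h1 h2, h3]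
  have hu : (fun x : Rd d => (((2 * Real.pi) ^ d : ℝ) : ℂ)⁻¹ *
      ∫ ξ : Rd d, Complex.exp (Complex.I * (↑(⟪x, ξ⟫) : ℂ)) *
        Complex.exp (-(↑(t * ‖ξ‖) : ℂ)) * FT (⇑P.φ) ((2 : ℝ) ^ (-j) • ξ) * FT (⇑f) ξ)
      = fun x => ∫ z, k z * g (x + z) := by
    funext x
    simp only [hk, mul_assoc (((2 * Real.pi) ^ d : ℝ) : ℂ)⁻¹]
    rw [integral_const_mul, ← integral_multiplier_eq m.integrable g.integrable]
    congr 1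
    refine integral_congr_ae (Eventually.of_forall fun ξ => ?_)
    simp only
    rw [hgFT, mul_assoc (Complex.exp _) (Complex.exp _), hmult]
    ring
  have hkint : ∫⁻ z, ‖k z‖ₑ ≤ ENNReal.ofReal (C * Real.exp (-(1 / 8) * 2 ^ j * t)) := by
    have hL := lintegral_FT_dilate (⇑(N s)) ha
    rw [← dilateSchwartz_coe (N s) ha.ne', ← hm] at hL
    simp only [hk, enorm_mul]
    rw [lintegral_const_mul' _ _ enorm_ne_top, hL, ← mul_assoc, ← Complex.ofReal_inv,
      ← ofReal_norm, Complex.norm_real, Real.norm_eq_abs, abs_of_pos (by positivity),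
      ← ENNReal.ofReal_mul (by positivity), inv_mul_cancel₀ (by positivity), ENNReal.ofReal_one,
      one_mul]
    refine hNint.trans_eq ?_
    rw [hs]
    congr 3
    ring
  rw [hu, hgLP]
  have hkc : Continuous k := continuous_const.mul (FT_continuous m)
  refine (eLpNorm_integral_mul_translate_le hkc g.continuous
    (hkint.trans_lt ENNReal.ofReal_lt_top).ne hp).trans ?_
  gcongr
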